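/- Let X be a reflexive real Banach space, let f ∈ Γ(X), and let x̄ ∈ X, ȳ* ∈ X* with ȳ* ∈ ∂f(x̄). Then ∂f is calm at x̄ for ȳ* if and only if there exist a neighborhood V of ȳ* in X* and a constant c > 0 such that f*(y*) ≥ f*(ȳ*) + ⟨y* − ȳ*, x̄⟩ + c·d(y*, ∂f(x̄))² for all y* ∈ V. Specifically, if ∂f is calm at x̄ for ȳ* with constant κ, then the conjugate growth condition holds for every c < 1/(4κ); conversely, if the conjugate growth condition holds with constant c, then ∂f is calm at x̄ for ȳ* with constant 1/c. -/

import Mathlib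

open Topology Filter Metric Set

/-- The convex subdifferential of an extended-real-valued function `f` at `x`. -/
noncomputable def subdiff {X : Type*} [NormedAddCommGroup X] [NormedSpace ℝ X]
    (f : X → EReal) (x : X) : Set (X →L[ℝ] ℝ) :=
  {p | f x ≠ ⊤ ∧ ∀ z : X, f x + ((p (z - x) : ℝ) : EReal) ≤ f z}

/-- The Fenchel conjugate `f*(p) = sup_x (⟨p, x⟩ - f(x))`. -/
noncomputable def fenchel {X : Type*} [NormedAddCommGroup X] [NormedSpace ℝ X]
    (f : X → EReal) (p : X →L[ℝ] ℝ) : EReal :=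
  ⨆ x : X, (((p x : ℝ) : EReal) - f x)

/-- `∂f` is calm at `x̄` for `ȳ*` with constant `κ`: there are neighborhoods `U` of `x̄` and
`V` of `ȳ*` with `e(∂f(x) ∩ V, ∂f(x̄)) ≤ κ·‖x - x̄‖` for all `x ∈ U` (the excess bound is
stated pointwise over `y ∈ ∂f(x) ∩ V`, matching `e(∅, D) = 0`). -/
def CalmAt {X : Type*} [NormedAddCommGroup X] [NormedSpace ℝ X]
    (f : X → EReal) (xbar : X) (ybar : X →L[ℝ] ℝ) (κ : ℝ) : Prop :=
  ∃ U ∈ 𝓝 xbar, ∃ V ∈ 𝓝 ybar, ∀ x ∈ U, ∀ y ∈ subdiff f x, y ∈ V →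
    infDist y (subdiff f xbar) ≤ κ * ‖x - xbar‖

/-- The conjugate quadratic growth condition with constant `c` on some neighborhood `V` of
`ȳ*`: `f*(y*) ≥ f*(ȳ*) + ⟨y* - ȳ*, x̄⟩ + c·d(y*, ∂f(x̄))²` for all `y* ∈ V`. -/
def ConjGrowth {X : Type*} [NormedAddCommGroup X] [NormedSpace ℝ X]
    (f : X → EReal) (xbar : X) (ybar : X →L[ℝ] ℝ) (c : ℝ) : Prop :=
  ∃ V ∈ 𝓝 ybar, ∀ y ∈ V,
    fenchel f ybar + (((y - ybar) xbar + c * (infDist y (subdiff f xbar)) ^ 2 : ℝ) : EReal)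
      ≤ fenchel f y

theorem ekeland_abs {X : Type*} [MetricSpace X] [CompleteSpace X] (A : Set X) (φ : X → ℝ)
    (m lam : ℝ) (hlam : 0 < lam) (hm : ∀ x ∈ A, m ≤ φ x)
    (hcl : ∀ x ∈ A, IsClosed {z | z ∈ A ∧ φ z + lam * dist x z ≤ φ x})
    (x0 : X) (hx0 : x0 ∈ A) :
    ∃ x ∈ A, φ x + lam * dist x0 x ≤ φ x0 ∧
      ∀ z ∈ A, φ z + lam * dist x z ≤ φ x → z = x := by
  have step : ∀ x : A, ∃ w : A, φ w + lam * dist (x : X) w ≤ φ x ∧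
      ∀ z ∈ A, φ z + lam * dist (x : X) z ≤ φ x → φ w ≤ (φ x + φ z) / 2 := by
    intro x
    set T : Set ℝ := φ '' {z | z ∈ A ∧ φ z + lam * dist (x : X) z ≤ φ x} with hT
    have hTb : BddBelow T := ⟨m, by rintro _ ⟨z, hz, rfl⟩; exact hm z hz.1⟩
    have hxT : φ x ∈ T := ⟨x, ⟨x.2, by simp⟩, rfl⟩
    have hle : sInf T ≤ φ x := csInf_le hTb hxT
    rcases hle.eq_or_lt with h | h
    · refine ⟨x, by simp, fun z hz hz2 => ?_⟩
      have : sInf T ≤ φ z := csInf_le hTb ⟨z, ⟨hz, hz2⟩, rfl⟩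
      linarith
    · obtain ⟨_, ⟨w, hw, rfl⟩, hw2⟩ := exists_lt_of_csInf_lt ⟨_, hxT⟩
        (show sInf T < (φ x + sInf T) / 2 by linarith)
      refine ⟨⟨w, hw.1⟩, hw.2, fun z hz hz2 => ?_⟩
      have : sInf T ≤ φ z := csInf_le hTb ⟨z, ⟨hz, hz2⟩, rfl⟩
      simp only
      linarith
  choose nxt h1 h2 using step
  let u : ℕ → A := fun n => nxt^[n] ⟨x0, hx0⟩
  have hu : ∀ n, u (n + 1) = nxt (u n) := fun n => Function.iterate_succ_apply' _ _ _
  have hstep : ∀ n k, φ (u (n + k)) + lam * dist (u n : X) (u (n + k)) ≤ φ (u n) := by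
    intro n k
    induction k with
    | zero => simp
    | succ k ih =>
      have a := h1 (u (n + k))
      rw [← hu] at a
      have b := dist_triangle (u n : X) (u (n + k)) (u (n + k + 1))
      have := mul_le_mul_of_nonneg_left b hlam.le
      rw [← add_assoc]
      linarith
  have hanti : Antitone (fun n => φ (u n)) := by
    apply antitone_nat_of_succ_le
    intro n
    have := hstep n 1
    have := mul_nonneg hlam.le (dist_nonneg (x := (u n : X)) (y := u (n + 1)))
    linarith
  have hbdd : BddBelow (range (fun n => φ (u n))) :=
    ⟨m, by rintro _ ⟨n, rfl⟩; exact hm _ (u n).2⟩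
  have hL := tendsto_atTop_ciInf hanti hbdd
  set L := ⨅ n, φ (u n) with hLdef
  have hLle : ∀ n, L ≤ φ (u n) := fun n => ciInf_le hbdd n
  have hdist : ∀ n k, dist (u n : X) (u (n + k)) ≤ (φ (u n) - L) / lam := by
    intro n k
    rw [le_div_iff₀ hlam]
    have := hstep n k
    have := hLle (n + k)
    linarith
  have hlim0 : Tendsto (fun n => (φ (u n) - L) / lam) atTop (𝓝 0) := by
    have := (hL.sub_const L).div_const lam
    simpa using this
  have hc : CauchySeq (fun n => (u n : X)) := by
    refine cauchySeq_of_le_tendsto_0' (fun n => (φ (u n) - L) / lam) (fun n k hnk => ?_) hlim0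
    obtain ⟨j, rfl⟩ := Nat.exists_eq_add_of_le hnk
    exact hdist n j
  obtain ⟨x, hx⟩ := cauchySeq_tendsto_of_complete hc
  have hxS : ∀ n, x ∈ {z | z ∈ A ∧ φ z + lam * dist (u n : X) z ≤ φ (u n)} := by
    intro n
    refine (hcl _ (u n).2).mem_of_tendsto hx ?_
    filter_upwards [eventually_ge_atTop n] with k hk
    obtain ⟨j, rfl⟩ := Nat.exists_eq_add_of_le hk
    exact ⟨(u _).2, hstep n j⟩
  refine ⟨x, (hxS 0).1, (hxS 0).2, fun z hz hz2 => ?_⟩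
  have hzS : ∀ n, φ z + lam * dist (u n : X) z ≤ φ (u n) := by
    intro n
    have a := (hxS n).2
    have b := mul_le_mul_of_nonneg_left (dist_triangle (u n : X) x z) hlam.le
    linarith
  have hzL : L ≤ φ z := by
    have a : ∀ n, φ (u (n + 1)) ≤ (φ (u n) + φ z) / 2 := fun n => by
      rw [hu]; exact h2 _ z hz (hzS n)
    have := le_of_tendsto_of_tendsto' (hL.comp (tendsto_add_atTop_nat 1))
      ((hL.add_const (φ z)).div_const 2) a
    linarith
  have hz0 : Tendsto (fun n => (u n : X)) atTop (𝓝 z) := by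
    rw [tendsto_iff_dist_tendsto_zero]
    refine squeeze_zero (fun _ => dist_nonneg) (fun n => ?_) hlim0
    rw [le_div_iff₀ hlam]
    have := hzS n
    linarith
  exact tendsto_nhds_unique hz0 hx

theorem sandwich {X : Type*} [NormedAddCommGroup X] [NormedSpace ℝ X]
    (f : X → EReal)
    (hconv : ∀ x y : X, ∀ a b : ℝ, 0 ≤ a → 0 ≤ b → a + b = 1 →
      f (a • x + b • y) ≤ (a : EReal) * f x + (b : EReal) * f y)
    (hne_bot : ∀ x, f x ≠ ⊥)
    (x : X) (α : ℝ) (hα : f x = α) (y : X →L[ℝ] ℝ) (lam : ℝ) (hlam : 0 ≤ lam)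
    (hmin : ∀ z, ((α + y (z - x) - lam * ‖z - x‖ : ℝ) : EReal) ≤ f z) :
    ∃ q ∈ subdiff f x, dist y q ≤ lam := by
  let C1 : Set (X × ℝ) := {p | p.2 < - (lam * ‖p.1‖)}
  let C2 : Set (X × ℝ) := {p | f (x + p.1) ≤ ((p.2 + α + y p.1 : ℝ) : EReal)}
  have hC1o : IsOpen C1 := isOpen_lt (by fun_prop) (by fun_prop)
  have hC1c : Convex ℝ C1 := by
    rintro ⟨u, s⟩ hu ⟨v, t⟩ hv a b ha hb hab
    simp only [C1, mem_setOf_eq, Prod.smul_mk, Prod.mk_add_mk, smul_eq_mul] at hu hv ⊢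
    have h1 : ‖a • u + b • v‖ ≤ a * ‖u‖ + b * ‖v‖ := by
      refine (norm_add_le _ _).trans ?_
      rw [norm_smul, norm_smul, Real.norm_of_nonneg ha, Real.norm_of_nonneg hb]
    have h2 := mul_le_mul_of_nonneg_left h1 hlam
    rcases ha.eq_or_lt with rfl | ha'
    · have : b = 1 := by linarith
      subst this
      simpa using hv
    · have h3 := mul_lt_mul_of_pos_left hu ha'
      have h4 := mul_le_mul_of_nonneg_left hv.le hb
      nlinarith
  have hC2c : Convex ℝ C2 := by
    rintro ⟨u, s⟩ hu ⟨v, t⟩ hv a b ha hb hab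
    simp only [C2, mem_setOf_eq, Prod.smul_mk, Prod.mk_add_mk, smul_eq_mul] at hu hv ⊢
    have e : x + (a • u + b • v) = a • (x + u) + b • (x + v) := by
      have : x = a • x + b • x := by rw [← add_smul, hab, one_smul]
      nth_rewrite 1 [this]
      simp only [smul_add]; abel
    rw [e]
    refine (hconv _ _ a b ha hb hab).trans ?_
    lift f (x + u) to ℝ using ⟨fun h => by rw [h] at hu; exact absurd hu (not_le.2 (EReal.coe_lt_top _)), hne_bot _⟩ with fu
    lift f (x + v) to ℝ using ⟨fun h => by rw [h] at hv; exact absurd hv (not_le.2 (EReal.coe_lt_top _)), hne_bot _⟩ with fv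
    norm_cast at hu hv ⊢
    rw [map_add, map_smul, map_smul, smul_eq_mul, smul_eq_mul]
    have h1 := mul_le_mul_of_nonneg_left hu ha
    have h2 := mul_le_mul_of_nonneg_left hv hb
    have h3 : α = a * α + b * α := by rw [← add_mul, hab, one_mul]
    linarith
  have hdisj : Disjoint C1 C2 := by
    rw [Set.disjoint_left]
    rintro ⟨u, t⟩ h1 h2
    simp only [C1, C2, mem_setOf_eq] at h1 h2
    have h3 := (hmin (x + u)).trans h2
    norm_cast at h3
    simp only [add_sub_cancel_left] at h3
    linarith
  obtain ⟨F, s, hF1, hF2⟩ := geometric_hahn_banach_open hC1c hC1o hC2c hdisj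
  have hsplit : ∀ u t, F (u, t) = F (u, 0) + t * F (0, 1) := by
    intro u t
    have : ((u, t) : X × ℝ) = (u, 0) + t • (0, 1) := by simp
    rw [this, map_add, map_smul, smul_eq_mul]
  set a := F (0, 1) with ha
  have hs0 : s ≤ 0 := by
    have := hF2 (0, 0) (by simp [C2, hα])
    have h0 : ((0, 0) : X × ℝ) = 0 := rfl
    rwa [h0, map_zero] at this
  have hF00 : F ((0 : X), (0 : ℝ)) = 0 := map_zero F
  have hapos : 0 < a := by
    have := hF1 (0, -1) (by simp [C1])
    rw [hsplit, hF00] at this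
    linarith
  have hs : s = 0 := by
    refine le_antisymm hs0 (le_of_forall_pos_le_add fun ε hε => ?_)
    have := hF1 (0, -(ε / a)) (by simp [C1]; positivity)
    rw [hsplit, hF00] at this
    have e : -(ε / a) * a = -ε := by field_simp
    rw [e] at this
    linarith
  subst hs
  let p : X →L[ℝ] ℝ := (-(1 / a)) • (F.comp (ContinuousLinearMap.inl ℝ X ℝ))
  have hp : ∀ u, F (u, 0) = - (a * p u) := by
    intro u
    simp [p]
    field_simp
  have hpn1 : ∀ u, -p u ≤ lam * ‖u‖ := by
    intro u
    refine le_of_forall_pos_le_add fun ε hε => ?_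
    have := hF1 (u, -(lam * ‖u‖) - ε) (by simp [C1, hε])
    rw [hsplit, hp] at this
    have h5 : a * (-p u - (lam * ‖u‖ + ε)) < 0 := by linarith
    have := neg_of_mul_neg_right h5 hapos.le
    linarith
  have hpn : ‖p‖ ≤ lam := by
    refine p.opNorm_le_bound hlam fun u => ?_
    rw [Real.norm_eq_abs, abs_le]
    have h1 := hpn1 u
    have h2 := hpn1 (-u)
    rw [map_neg, norm_neg] at h2
    constructor <;> linarith
  refine ⟨y + p, ⟨by simp [hα], fun z => ?_⟩, ?_⟩
  · rw [hα]
    rcases eq_or_ne (f z) ⊤ with h | h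
    · simp [h]
    obtain ⟨β, hβ⟩ : ∃ β : ℝ, f z = β := ⟨_, (EReal.coe_toReal h (hne_bot z)).symm⟩
    have h1 := hF2 (z - x, β - α - y (z - x)) (by
      simp only [C2, mem_setOf_eq, add_sub_cancel, hβ]
      norm_cast; linarith)
    rw [hsplit, hp] at h1
    rw [hβ]
    norm_cast
    have h5 : 0 ≤ a * (β - α - y (z - x) - p (z - x)) := by linarith
    have := nonneg_of_mul_nonneg_right h5 hapos
    rw [ContinuousLinearMap.add_apply]
    linarith
  · rw [dist_eq_norm]
    simpa using hpn

theorem bronsted {X : Type*} [NormedAddCommGroup X] [NormedSpace ℝ X] [CompleteSpace X]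
    (f : X → EReal)
    (hne_bot : ∀ x, f x ≠ ⊥)
    (hlsc : LowerSemicontinuous f)
    (hconv : ∀ x y : X, ∀ a b : ℝ, 0 ≤ a → 0 ≤ b → a + b = 1 →
      f (a • x + b • y) ≤ (a : EReal) * f x + (b : EReal) * f y)
    (xbar : X) (α : ℝ) (hα : f xbar = α) (y : X →L[ℝ] ℝ) (ε lam : ℝ) (hlam : 0 < lam)
    (hy : ∀ z, ((α + y (z - xbar) - ε : ℝ) : EReal) ≤ f z) :
    ∃ x, ∃ q ∈ subdiff f x, lam * ‖x - xbar‖ ≤ ε ∧ dist y q ≤ lam := by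
  have hreal : ∀ z, f z ≠ ⊤ → f z = ((f z).toReal : EReal) := fun z h =>
    (EReal.coe_toReal h (hne_bot z)).symm
  have key : ∀ x z : X, ∀ r : ℝ, (f z ≠ ⊤ ∧ (f z).toReal - y z + lam * dist x z ≤ r) ↔
      f z ≤ ((r + y z - lam * dist x z : ℝ) : EReal) := by
    intro x z r
    constructor
    · rintro ⟨h1, h2⟩
      rw [hreal z h1]
      norm_cast
      linarith
    · intro h
      have h1 : f z ≠ ⊤ := fun h' => by
        rw [h'] at h; exact absurd h (not_le.2 (EReal.coe_lt_top _))
      refine ⟨h1, ?_⟩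
      rw [hreal z h1] at h
      norm_cast at h
      linarith
  obtain ⟨x, hxA, hx1, hx2⟩ := ekeland_abs {z | f z ≠ ⊤} (fun z => (f z).toReal - y z)
    (α - y xbar - ε) lam hlam (by
      intro z hz
      have := hy z
      rw [hreal z hz] at this
      norm_cast at this
      rw [map_sub] at this
      linarith) (by
      intro x hx
      simp only [mem_setOf_eq, key]
      have hcl := hlsc.isClosed_epigraph
      have hc : Continuous (fun z => (z, ((((f x).toReal - y x) + y z - lam * dist x z : ℝ) : EReal))) := by
        refine continuous_id.prodMk (continuous_coe_real_ereal.comp ?_)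
        fun_prop
      exact hcl.preimage hc) xbar (by simp [hα])
  obtain ⟨q, hq, hqd⟩ := sandwich f hconv hne_bot x _ (hreal x hxA) y lam hlam.le (by
    intro z
    by_contra hlt
    rw [not_le] at hlt
    have hz : f z ≠ ⊤ := fun h => by rw [h] at hlt; exact absurd hlt (by simp)
    have hlt' := hlt
    rw [hreal z hz] at hlt'
    norm_cast at hlt'
    rw [map_sub, ← dist_eq_norm, dist_comm] at hlt'
    have := hx2 z hz (by linarith)
    subst this
    simp at hlt')
  refine ⟨x, q, hq, ?_, hqd⟩
  have h := hy x
  rw [hreal x hxA] at h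
  norm_cast at h
  simp only [hα, EReal.toReal_coe] at hx1
  rw [map_sub] at h
  rw [← dist_eq_norm, dist_comm]
  linarith

/-- Let `X` be a reflexive Banach space, `f ∈ Γ(X)`, `ȳ* ∈ ∂f(x̄)`. Then `∂f`
is calm at `x̄` for `ȳ*` iff the conjugate quadratic growth condition holds for some `c > 0`
on some neighborhood of `ȳ*`. Specifically, calmness with constant `κ` yields the growth
condition for every `0 < c < 1/(4κ)`, and the growth condition with constant `c` yields
calmness with constant `1/c`. -/
theorem stmt_12 {X : Type*} [NormedAddCommGroup X] [NormedSpace ℝ X] [CompleteSpace X]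
    (hrefl : Function.Surjective ⇑(NormedSpace.inclusionInDoubleDual ℝ X))
    (f : X → EReal)
    (hproper : ∃ x, f x ≠ ⊤) (hne_bot : ∀ x, f x ≠ ⊥)
    (hlsc : LowerSemicontinuous f)
    (hconv : ∀ x y : X, ∀ a b : ℝ, 0 ≤ a → 0 ≤ b → a + b = 1 →
      f (a • x + b • y) ≤ (a : EReal) * f x + (b : EReal) * f y)
    (xbar : X) (ybar : X →L[ℝ] ℝ) (hybar : ybar ∈ subdiff f xbar) :
    ((∃ κ > (0 : ℝ), CalmAt f xbar ybar κ) ↔ (∃ c > (0 : ℝ), ConjGrowth f xbar ybar c)) ∧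
    (∀ κ > (0 : ℝ), CalmAt f xbar ybar κ →
      ∀ c : ℝ, 0 < c → c < 1 / (4 * κ) → ConjGrowth f xbar ybar c) ∧
    (∀ c > (0 : ℝ), ConjGrowth f xbar ybar c → CalmAt f xbar ybar (1 / c)) := by
  obtain ⟨hfin, hyb⟩ := id hybar
  obtain ⟨α, hα⟩ : ∃ α : ℝ, f xbar = α := ⟨_, (EReal.coe_toReal hfin (hne_bot _)).symm⟩
  have hfen_le : ∀ (x : X) (β : ℝ), f x = β → ∀ y ∈ subdiff f x,
      fenchel f y ≤ ((y x - β : ℝ) : EReal) := by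
    rintro x β hβ y ⟨-, hy⟩
    refine iSup_le fun z => ?_
    have h := hy z
    rw [hβ] at h
    rcases eq_or_ne (f z) ⊤ with h' | h'
    · simp [h']
    rw [← EReal.coe_toReal h' (hne_bot z)] at h ⊢
    norm_cast at h ⊢
    rw [map_sub] at h
    linarith
  have hfen_ge : ∀ y : X →L[ℝ] ℝ, ((y xbar - α : ℝ) : EReal) ≤ fenchel f y := by
    intro y
    have := le_iSup (fun x => ((y x : ℝ) : EReal) - f x) xbar
    simp only [hα] at this
    exact_mod_cast this
  have hfb : fenchel f ybar = ((ybar xbar - α : ℝ) : EReal) :=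
    le_antisymm (hfen_le _ _ hα _ hybar) (hfen_ge _)
  have hne : (subdiff f xbar).Nonempty := ⟨_, hybar⟩
  have A : ∀ κ > (0 : ℝ), CalmAt f xbar ybar κ →
      ∀ c : ℝ, 0 < c → c < 1 / (4 * κ) → ConjGrowth f xbar ybar c := by
    rintro κ hκ ⟨U, hU, V, hV, hcalm⟩ c hc hcκ
    obtain ⟨r, hr, hrU⟩ := Metric.mem_nhds_iff.1 hU
    obtain ⟨s, hs, hsV⟩ := Metric.mem_nhds_iff.1 hV
    have hδ : 0 < min (r / (2 * c)) (s / 2) := by positivity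
    refine ⟨ball ybar (min (r / (2 * c)) (s / 2)), ball_mem_nhds _ hδ, fun y hy => ?_⟩
    rw [mem_ball, lt_min_iff] at hy
    obtain ⟨hy1, hy2⟩ := hy
    rw [hfb]
    set d := infDist y (subdiff f xbar) with hd
    have hd0 : 0 ≤ d := infDist_nonneg
    have hdle : d ≤ dist y ybar := infDist_le_dist_of_mem hybar
    have e : ((ybar xbar - α : ℝ) : EReal) + (((y - ybar) xbar + c * d ^ 2 : ℝ) : EReal)
        = ((y xbar - α + c * d ^ 2 : ℝ) : EReal) := by
      norm_cast
      rw [ContinuousLinearMap.sub_apply]; ring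
    rw [e]
    rcases hd0.eq_or_lt with h0 | hdpos
    · rw [← h0]; simpa using hfen_ge y
    by_contra hlt
    rw [not_le] at hlt
    obtain ⟨x, q, hq, hx, hyq⟩ := bronsted f hne_bot hlsc hconv xbar α hα y (c * d ^ 2) (d / 2)
      (by positivity) (by
        intro z
        rcases eq_or_ne (f z) ⊤ with h' | h'
        · simp [h']
        have h := (le_iSup (fun x => ((y x : ℝ) : EReal) - f x) z).trans hlt.le
        rw [← EReal.coe_toReal h' (hne_bot z)] at h ⊢
        norm_cast at h ⊢
        rw [map_sub]
        linarith)
    have hx' : ‖x - xbar‖ ≤ 2 * c * d := by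
      have : d * ‖x - xbar‖ ≤ d * (2 * c * d) := by nlinarith
      exact le_of_mul_le_mul_left this hdpos
    have hxU : x ∈ U := hrU (by
      rw [mem_ball, dist_eq_norm]
      rw [lt_div_iff₀ (by positivity)] at hy1
      have := mul_le_mul_of_nonneg_left hdle hc.le
      linarith)
    have hqV : q ∈ V := hsV (by
      rw [mem_ball]
      have := dist_triangle q y ybar
      rw [dist_comm q y] at this
      linarith)
    have h1 := hcalm x hxU q hq hqV
    have h2 : d ≤ infDist q (subdiff f xbar) + dist y q := infDist_le_infDist_add_dist
    have h3 := mul_le_mul_of_nonneg_left hx' hκ.le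
    rw [lt_div_iff₀ (by positivity)] at hcκ
    have h4 : c * (4 * κ) * d < 1 * d := mul_lt_mul_of_pos_right hcκ hdpos
    linarith
  have B : ∀ c > (0 : ℝ), ConjGrowth f xbar ybar c → CalmAt f xbar ybar (1 / c) := by
    rintro c hc ⟨V, hV, hg⟩
    refine ⟨univ, univ_mem, V, hV, fun x _ y hy hyV => ?_⟩
    obtain ⟨β, hβ⟩ : ∃ β : ℝ, f x = β := ⟨_, (EReal.coe_toReal hy.1 (hne_bot _)).symm⟩
    have h := (hg y hyV).trans (hfen_le x β hβ y hy)
    rw [hfb] at h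
    norm_cast at h
    rw [ContinuousLinearMap.sub_apply] at h
    set d := infDist y (subdiff f xbar) with hd
    have hd0 : 0 ≤ d := infDist_nonneg
    have hz : ∀ z ∈ subdiff f xbar, c * d ^ 2 ≤ dist y z * ‖x - xbar‖ := by
      rintro z ⟨-, hz⟩
      have hz := hz x
      rw [hα, hβ] at hz
      norm_cast at hz
      have h1 := (le_abs_self _).trans ((y - z).le_opNorm (x - xbar))
      rw [ContinuousLinearMap.sub_apply, map_sub y] at h1
      rw [dist_eq_norm]
      linarith
    have hfinal : c * d ^ 2 ≤ d * ‖x - xbar‖ := by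
      rcases (norm_nonneg (x - xbar)).eq_or_lt with h0 | hpos
      · have := hz _ hybar
        rw [← h0] at this ⊢
        simpa using this
      · rw [← div_le_iff₀ hpos]
        exact (le_infDist hne).2 fun {z} hz' => (div_le_iff₀ hpos).2 (hz z hz')
    rw [div_mul_eq_mul_div, one_mul, le_div_iff₀ hc]
    rcases hd0.eq_or_lt with h0 | hpos
    · rw [← h0]; simp
    · have : d * (d * c) ≤ d * ‖x - xbar‖ := by linarith
      exact le_of_mul_le_mul_left this hpos
  refine ⟨⟨?_, ?_⟩, A, B⟩
  · rintro ⟨κ, hκ, h⟩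
    have h0 : 0 < 1 / (4 * κ) := by positivity
    exact ⟨1 / (4 * κ) / 2, by positivity, A κ hκ h _ (by positivity) (by linarith)⟩
  · rintro ⟨c, hc, h⟩
    exact ⟨1 / c, by positivity, B c hc h⟩
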